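/- Let n ≥ 1 and let Ω be the open ball in ℝⁿ of radius d/2 centered at 0. Let A, B : Ω → (0,∞) be continuous radial functions with A(x) ≤ B(x) for all x ∈ Ω, and let f, h : Ω → ℝ be continuous nonnegative radial functions, f(x) = f̃(‖x‖), h(x) = h̃(‖x‖), A(x) = Ã(‖x‖), B(x) = B̃(‖x‖). Let u : Ω → ℝ be a radial C¹ function such that both vector fields x ↦ A(x)∇u(x) and x ↦ B(x)∇u(x) are C¹ on Ω, with div(A ∇u) = −f and div(B ∇u) = −h pointwise in Ω. Then for every t ∈ (0, d/2): B̃(t) ∫₀^t s^{n−1} f̃(s) ds = Ã(t) ∫₀^t s^{n−1} h̃(s) ds; in particular, ∫₀^t s^{n−1} h̃(s) ds ≥ ∫₀^t s^{n−1} f̃(s) ds for every t ∈ (0, d/2). -/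

import Mathlib

open MeasureTheory Metric Set

noncomputable section

abbrev Euc (n : ℕ) := EuclideanSpace ℝ (Fin n)

/-- The nonlocal functional `l_r(v)(x) = ∫_{Ω ∩ B̄(x,r)} g(y) v(y) dy`. -/
def lr {n : ℕ} (Ω : Set (Euc n)) (g : Euc n → ℝ) (r : ℝ) (v : Euc n → ℝ) (x : Euc n) : ℝ :=
  ∫ y in Ω ∩ closedBall x r, g y * v y

/-- Divergence of a vector field on `ℝⁿ`. -/
def diverg {n : ℕ} (F : Euc n → Euc n) (x : Euc n) : ℝ :=
  ∑ i, fderiv ℝ F x (EuclideanSpace.single i 1) i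

/-- A classical solution of the nonlocal parabolic problem
`∂ₜ u = div(a(l_r(u)) ∇u) + f` on the time interval `I`, vanishing on `I × ∂Ω`. -/
structure IsParabolicSol {n : ℕ} (Ω : Set (Euc n)) (g : Euc n → ℝ) (r : ℝ)
    (a : ℝ → ℝ) (f : ℝ → Euc n → ℝ) (I : Set ℝ) (u : ℝ → Euc n → ℝ) : Prop where
  cont : ContinuousOn (fun p : ℝ × Euc n => u p.1 p.2) (I ×ˢ closure Ω)
  bdry : ∀ t ∈ I, ∀ x ∈ frontier Ω, u t x = 0
  tdiff : ∀ t ∈ interior I, ∀ x ∈ Ω, DifferentiableAt ℝ (fun s => u s x) t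
  xreg : ∀ t ∈ interior I, ContDiffOn ℝ 2 (u t) Ω
  fdiff : ∀ t ∈ interior I, ∀ x ∈ Ω,
    DifferentiableAt ℝ (fun y => a (lr Ω g r (u t) y) • gradient (u t) y) x
  pde : ∀ t ∈ interior I, ∀ x ∈ Ω,
    deriv (fun s => u s x) t =
      diverg (fun y => a (lr Ω g r (u t) y) • gradient (u t) y) x + f t x

/-!
Along radii the problem is one-dimensional: off the origin `∇u(x) = ũ'(‖x‖) x / ‖x‖`, so the flux
`A∇u` is the radial field `φ(‖x‖) x` with `φ(s) = Ã(s) ũ'(s) / s`; this persists at `x = 0`, where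
`∇u` vanishes because `u` is even, whatever the junk value `φ(0)` is. By the product rule
`div (φ(‖x‖) x) = n φ(s) + s φ'(s)` at `s = ‖x‖`, which is `s^{1-n} (s^n φ(s))'`, so integrating
`div (A∇u) = -f` gives `∫₀ᵗ s^{n-1} f̃(s) ds = -t^{n-1} Ã(t) ũ'(t)`. The same holds for `B` and `h`,
and eliminating the common factor `t^{n-1} ũ'(t)` yields the identity.
-/

section NormedSpace

variable {E : Type*} [NormedAddCommGroup E] [NormedSpace ℝ E]

theorem norm_smul_of_norm_eq_one {e : E} (he : ‖e‖ = 1) {s : ℝ} (hs : 0 ≤ s) : ‖s • e‖ = s := by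
  rw [norm_smul_of_nonneg hs, he, mul_one]

theorem mapsTo_smul_ball_zero {e : E} (he : ‖e‖ = 1) (R : ℝ) :
    MapsTo (fun s : ℝ => s • e) (Ico 0 R) (ball 0 R) := fun s hs => by
  rw [mem_ball_zero_iff, norm_smul_of_norm_eq_one he hs.1]
  exact hs.2

theorem continuousOn_Ico_of_comp_norm [Nontrivial E] {α : Type*} [TopologicalSpace α]
    {p : ℝ → α} {R : ℝ} (hp : ContinuousOn (fun x : E => p ‖x‖) (ball 0 R)) :
    ContinuousOn p (Ico 0 R) := by
  obtain ⟨e, he⟩ := exists_norm_eq E zero_le_one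
  exact (hp.comp (by fun_prop) (mapsTo_smul_ball_zero he R)).congr fun s hs =>
    (congrArg p (norm_smul_of_norm_eq_one he hs.1)).symm

theorem forall_mem_Ico_of_forall_mem_ball [Nontrivial E] {P : ℝ → Prop} {R : ℝ}
    (hP : ∀ x ∈ ball (0 : E) R, P ‖x‖) : ∀ s ∈ Ico 0 R, P s := by
  rintro s ⟨hs0, hsR⟩
  obtain ⟨x, rfl⟩ := exists_norm_eq E hs0
  exact hP x (mem_ball_zero_iff.mpr hsR)

theorem differentiableAt_of_comp_norm {G : Type*} [NormedAddCommGroup G] [NormedSpace ℝ G]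
    {p : ℝ → G} {x : E} (hx : x ≠ 0) (hp : DifferentiableAt ℝ (fun y : E => p ‖y‖) x) :
    DifferentiableAt ℝ p ‖x‖ := by
  have hpos : 0 < ‖x‖ := norm_pos_iff.mpr hx
  have hray : DifferentiableAt ℝ (fun s : ℝ => (s / ‖x‖) • x) ‖x‖ := by fun_prop
  have hp' : DifferentiableAt ℝ (fun y : E => p ‖y‖) ((‖x‖ / ‖x‖) • x) := by
    rwa [div_self hpos.ne', one_smul]
  refine (hp'.comp ‖x‖ hray).congr_of_eventuallyEq ?_
  filter_upwards [eventually_gt_nhds hpos] with s hs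
  have norm_ray : ‖(s / ‖x‖) • x‖ = s := by
    rw [norm_smul_of_nonneg (by positivity), div_mul_cancel₀ s hpos.ne']
  exact (congrArg p norm_ray).symm

theorem fderiv_zero_of_even {G : Type*} [NormedAddCommGroup G] [NormedSpace ℝ G]
    {u : E → G} (hu : ∀ᶠ x in nhds 0, u (-x) = u x) : fderiv ℝ u 0 = 0 := by
  have hneg : fderiv ℝ u 0 = -fderiv ℝ u 0 := by
    calc fderiv ℝ u 0 = fderiv ℝ (fun x => u ((-1 : ℝ) • x)) 0 := by
          refine Filter.EventuallyEq.fderiv_eq ?_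
          filter_upwards [hu] with x hx
          rw [neg_one_smul, hx]
      _ = -fderiv ℝ u 0 := by rw [fderiv_comp_smul, smul_zero, neg_one_smul]
  have : IsAddTorsionFree (E →L[ℝ] G) := .of_isTorsionFree ℝ _
  exact self_eq_neg.mp hneg

end NormedSpace

section InnerProductSpace

variable {E : Type*} [NormedAddCommGroup E] [InnerProductSpace ℝ E]

theorem continuousOn_id_mul_of_comp_norm_smul_self [Nontrivial E] {φ : ℝ → ℝ} {R : ℝ}
    (hφ : ContinuousOn (fun x : E => φ ‖x‖ • x) (ball 0 R)) :
    ContinuousOn (fun s => s * φ s) (Ico 0 R) := by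
  obtain ⟨e, he⟩ := exists_norm_eq E zero_le_one
  have hray := hφ.comp (g := fun x : E => φ ‖x‖ • x) (by fun_prop) (mapsTo_smul_ball_zero he R)
  refine (hray.inner (𝕜 := ℝ) (continuousOn_const (c := e))).congr fun s hs => ?_
  simp [norm_smul_of_norm_eq_one he hs.1, inner_smul_left, he, mul_comm]

theorem differentiableAt_of_comp_norm_smul_self {φ : ℝ → ℝ} {x : E} (hx : x ≠ 0)
    (hφ : DifferentiableAt ℝ (fun y : E => φ ‖y‖ • y) x) : DifferentiableAt ℝ φ ‖x‖ := by
  refine differentiableAt_of_comp_norm hx ?_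
  have hquot : DifferentiableAt ℝ (fun y : E => inner ℝ (φ ‖y‖ • y) y * (‖y‖ ^ 2)⁻¹) x :=
    (hφ.inner ℝ differentiableAt_fun_id).fun_mul ((differentiableAt_fun_id.norm_sq ℝ).fun_inv
      (pow_ne_zero 2 (norm_ne_zero_iff.mpr hx)))
  refine hquot.congr_of_eventuallyEq ?_
  filter_upwards [isOpen_ne.mem_nhds hx] with y hy
  rw [real_inner_smul_left, real_inner_self_eq_norm_sq,
    mul_inv_cancel_right₀ (pow_ne_zero 2 (norm_ne_zero_iff.mpr hy))]

variable [CompleteSpace E]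

theorem hasGradientAt_norm {x : E} (hx : x ≠ 0) :
    HasGradientAt (fun y : E => ‖y‖) (‖x‖⁻¹ • x) x := by
  have hsqrt := (hasStrictFDerivAt_norm_sq x).hasFDerivAt.sqrt
    (pow_ne_zero 2 (norm_ne_zero_iff.mpr hx))
  simp only [Real.sqrt_sq (norm_nonneg _)] at hsqrt
  refine hasGradientAt_iff_hasFDerivAt.mpr (hsqrt.congr_fderiv ?_)
  ext v
  simp only [one_div, mul_inv_rev, smul_apply, coe_innerSL_apply, nsmul_eq_mul, Nat.cast_ofNat,
    smul_eq_mul, map_smul, InnerProductSpace.toDual_apply_apply]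
  field_simp

theorem gradient_comp_norm {p : ℝ → ℝ} {x : E}
    (hp : DifferentiableAt ℝ (fun y : E => p ‖y‖) x) :
    gradient (fun y : E => p ‖y‖) x = (deriv p ‖x‖ / ‖x‖) • x := by
  obtain rfl | hx := eq_or_ne x 0
  · rw [gradient, fderiv_zero_of_even (by simp), map_zero, smul_zero]
  have hcomp := (differentiableAt_of_comp_norm hx hp).hasDerivAt.comp_hasFDerivAt x
    (hasGradientAt_norm hx).hasFDerivAt
  refine HasGradientAt.gradient (hasGradientAt_iff_hasFDerivAt.mpr (hcomp.congr_fderiv ?_))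
  rw [← map_smul, smul_smul, div_eq_mul_inv]

end InnerProductSpace

section Divergence

variable {n : ℕ}

theorem diverg_congr {F G : Euc n → Euc n} {x : Euc n} (h : F =ᶠ[nhds x] G) :
    diverg F x = diverg G x := by
  simp only [diverg, h.fderiv_eq]

theorem diverg_smul_self {c : Euc n → ℝ} {x : Euc n} (hc : DifferentiableAt ℝ c x) :
    diverg (fun y => c y • y) x = n * c x + fderiv ℝ c x x := by
  have hfderiv : fderiv ℝ c x x = ∑ i, fderiv ℝ c x (EuclideanSpace.single i 1) * x i := by
    conv_lhs => rhs; rw [← (EuclideanSpace.basisFun (Fin n) ℝ).sum_repr x]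
    simp [mul_comm]
  simp [diverg, fderiv_fun_smul hc differentiableAt_fun_id, Finset.sum_add_distrib, hfderiv]

theorem diverg_comp_norm_smul_self {φ : ℝ → ℝ} {x : Euc n}
    (hφ : DifferentiableAt ℝ (fun y : Euc n => φ ‖y‖) x) :
    diverg (fun y => φ ‖y‖ • y) x = n * φ ‖x‖ + ‖x‖ * deriv φ ‖x‖ := by
  rw [diverg_smul_self hφ, ← inner_gradient_left, gradient_comp_norm hφ, real_inner_smul_left,
    real_inner_self_eq_norm_sq]
  field_simp

variable [NeZero n]

theorem hasDerivAt_pow_mul_of_diverg_eq {φ g : ℝ → ℝ} {R s : ℝ}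
    (hφ : DifferentiableOn ℝ (fun x : Euc n => φ ‖x‖ • x) (ball 0 R))
    (hdiv : ∀ x ∈ ball (0 : Euc n) R, diverg (fun y => φ ‖y‖ • y) x = g ‖x‖)
    (hs : s ∈ Ioo 0 R) :
    HasDerivAt (fun r => r ^ n * φ r) (s ^ (n - 1) * g s) s := by
  obtain ⟨x, rfl⟩ := exists_norm_eq (Euc n) hs.1.le
  have hx : x ≠ 0 := norm_pos_iff.mp hs.1
  have hxR : x ∈ ball 0 R := mem_ball_zero_iff.mpr hs.2
  have hφx : DifferentiableAt ℝ φ ‖x‖ :=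
    differentiableAt_of_comp_norm_smul_self hx (hφ.differentiableAt (isOpen_ball.mem_nhds hxR))
  refine ((hasDerivAt_pow n ‖x‖).mul hφx.hasDerivAt).congr_deriv ?_
  rw [← hdiv x hxR, diverg_comp_norm_smul_self (hφx.comp x (differentiableAt_fun_id.norm ℝ hx)),
    ← pow_sub_one_mul (NeZero.ne n) ‖x‖]
  ring

/-- The divergence theorem on the ball of radius `t`, up to the area of the unit sphere. -/
theorem integral_pow_mul_of_diverg_eq {φ g : ℝ → ℝ} {R t : ℝ}
    (hφ : DifferentiableOn ℝ (fun x : Euc n => φ ‖x‖ • x) (ball 0 R))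
    (hdiv : ∀ x ∈ ball (0 : Euc n) R, diverg (fun y => φ ‖y‖ • y) x = g ‖x‖)
    (ht : t ∈ Ico 0 R) (hg : IntervalIntegrable (fun s => s ^ (n - 1) * g s) volume 0 t) :
    ∫ s in (0 : ℝ)..t, s ^ (n - 1) * g s = t ^ n * φ t := by
  have hcont : ContinuousOn (fun s => s ^ n * φ s) (Icc 0 t) := by
    have hmul := continuousOn_id_mul_of_comp_norm_smul_self hφ.continuousOn
    refine (((continuousOn_pow (n - 1)).mul hmul).mono (Icc_subset_Ico_right ht.2)).congr
      fun s _ => ?_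
    simp only [Pi.mul_apply]
    rw [← mul_assoc, pow_sub_one_mul (NeZero.ne n)]
  rw [intervalIntegral.integral_eq_sub_of_hasDerivAt_of_le ht.1 hcont
    (fun s hs => hasDerivAt_pow_mul_of_diverg_eq hφ hdiv (Ioo_subset_Ioo_right ht.2.le hs)) hg,
    zero_pow (NeZero.ne n), zero_mul, sub_zero]

end Divergence

section RadialDiffusion

variable {n : ℕ} {R : ℝ} {a u : Euc n → ℝ} {atil util : ℝ → ℝ}

theorem smul_gradient_eqOn_of_radial (ha : EqOn a (fun x => atil ‖x‖) (ball 0 R))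
    (hu : EqOn u (fun x => util ‖x‖) (ball 0 R)) (hdiff : DifferentiableOn ℝ u (ball 0 R)) :
    EqOn (fun x => a x • gradient u x)
      (fun x => (atil ‖x‖ * deriv util ‖x‖ / ‖x‖) • x) (ball 0 R) := by
  intro x hx
  have hball : ball (0 : Euc n) R ∈ nhds x := isOpen_ball.mem_nhds hx
  have hux : u =ᶠ[nhds x] fun y => util ‖y‖ := hu.eventuallyEq_of_mem hball
  simp only [ha hx, hux.gradient_eq,
    gradient_comp_norm ((hdiff.differentiableAt hball).congr_of_eventuallyEq hux.symm),
    smul_smul, mul_div_assoc]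

theorem integral_pow_mul_eq_neg_flux [NeZero n] {f : Euc n → ℝ} {ftil : ℝ → ℝ}
    (ha : EqOn a (fun x => atil ‖x‖) (ball 0 R)) (hu : EqOn u (fun x => util ‖x‖) (ball 0 R))
    (hf : EqOn f (fun x => ftil ‖x‖) (ball 0 R)) (hfc : ContinuousOn f (ball 0 R))
    (hdiff : DifferentiableOn ℝ u (ball 0 R))
    (hflux : DifferentiableOn ℝ (fun x => a x • gradient u x) (ball 0 R))
    (hpde : ∀ x ∈ ball 0 R, diverg (fun y => a y • gradient u y) x = -f x)
    {t : ℝ} (ht : t ∈ Ioo 0 R) :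
    ∫ s in (0 : ℝ)..t, s ^ (n - 1) * ftil s = -(t ^ (n - 1) * (atil t * deriv util t)) := by
  have hradial := smul_gradient_eqOn_of_radial ha hu hdiff
  have hdiv : ∀ x ∈ ball (0 : Euc n) R,
      diverg (fun y => (atil ‖y‖ * deriv util ‖y‖ / ‖y‖) • y) x = -ftil ‖x‖ := fun x hx => by
    rw [← diverg_congr (hradial.eventuallyEq_of_mem (isOpen_ball.mem_nhds hx)), hpde x hx, hf hx]
  have hftil : ContinuousOn ftil (Icc 0 t) :=
    (continuousOn_Ico_of_comp_norm (hfc.congr hf.symm)).mono (Icc_subset_Ico_right ht.2)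
  have hint : IntervalIntegrable (fun s => s ^ (n - 1) * -ftil s) volume 0 t :=
    ((continuousOn_pow (n - 1)).mul hftil.neg).intervalIntegrable_of_Icc ht.1.le
  have hgauss := integral_pow_mul_of_diverg_eq (φ := fun s => atil s * deriv util s / s)
    (g := fun s => -ftil s) (hflux.congr hradial.symm) hdiv (Ioo_subset_Ico_self ht) hint
  simp only [mul_neg, intervalIntegral.integral_neg] at hgauss
  rw [← neg_eq_iff_eq_neg, hgauss, ← pow_sub_one_mul (NeZero.ne n) t, mul_assoc,
    mul_div_cancel₀ _ ht.1.ne']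

end RadialDiffusion

theorem statement4_general {n : ℕ} (hn : 1 ≤ n) {R : ℝ}
    {A B f h u : Euc n → ℝ} {Atil Btil ftil htil util : ℝ → ℝ}
    (hfc : ContinuousOn f (ball 0 R)) (hhc : ContinuousOn h (ball 0 R))
    (hApos : ∀ x ∈ ball 0 R, 0 < A x) (hAB : ∀ x ∈ ball 0 R, A x ≤ B x)
    (hfpos : ∀ x ∈ ball 0 R, 0 ≤ f x)
    (hArad : ∀ x ∈ ball 0 R, A x = Atil ‖x‖) (hBrad : ∀ x ∈ ball 0 R, B x = Btil ‖x‖)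
    (hfrad : ∀ x ∈ ball 0 R, f x = ftil ‖x‖) (hhrad : ∀ x ∈ ball 0 R, h x = htil ‖x‖)
    (hurad : ∀ x ∈ ball 0 R, u x = util ‖x‖) (hu : DifferentiableOn ℝ u (ball 0 R))
    (hFA : DifferentiableOn ℝ (fun x => A x • gradient u x) (ball 0 R))
    (hFB : DifferentiableOn ℝ (fun x => B x • gradient u x) (ball 0 R))
    (hpdeA : ∀ x ∈ ball 0 R, diverg (fun y => A y • gradient u y) x = -f x)
    (hpdeB : ∀ x ∈ ball 0 R, diverg (fun y => B y • gradient u y) x = -h x)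
    {t : ℝ} (ht : t ∈ Ioo 0 R) :
    Btil t * (∫ s in (0 : ℝ)..t, s ^ (n - 1) * ftil s)
        = Atil t * (∫ s in (0 : ℝ)..t, s ^ (n - 1) * htil s) ∧
      (∫ s in (0 : ℝ)..t, s ^ (n - 1) * ftil s) ≤ ∫ s in (0 : ℝ)..t, s ^ (n - 1) * htil s := by
  have : NeZero n := ⟨Nat.one_le_iff_ne_zero.mp hn⟩
  have hflux : Btil t * (∫ s in (0 : ℝ)..t, s ^ (n - 1) * ftil s)
      = Atil t * (∫ s in (0 : ℝ)..t, s ^ (n - 1) * htil s) := by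
    rw [integral_pow_mul_eq_neg_flux hArad hurad hfrad hfc hu hFA hpdeA ht,
      integral_pow_mul_eq_neg_flux hBrad hurad hhrad hhc hu hFB hpdeB ht]
    ring
  have hAtil : ∀ s ∈ Ico 0 R, 0 < Atil s :=
    forall_mem_Ico_of_forall_mem_ball fun x hx => hArad x hx ▸ hApos x hx
  have hABtil : ∀ s ∈ Ico 0 R, Atil s ≤ Btil s :=
    forall_mem_Ico_of_forall_mem_ball fun x hx => hArad x hx ▸ hBrad x hx ▸ hAB x hx
  have hftil : ∀ s ∈ Ico 0 R, 0 ≤ ftil s :=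
    forall_mem_Ico_of_forall_mem_ball fun x hx => hfrad x hx ▸ hfpos x hx
  have hnonneg : 0 ≤ ∫ s in (0 : ℝ)..t, s ^ (n - 1) * ftil s :=
    intervalIntegral.integral_nonneg ht.1.le fun s hs =>
      mul_nonneg (pow_nonneg hs.1 _) (hftil s (Icc_subset_Ico_right ht.2 hs))
  have htR : t ∈ Ico 0 R := Ioo_subset_Ico_self ht
  refine ⟨hflux, le_of_mul_le_mul_left ?_ (hAtil t htR)⟩
  exact hflux ▸ mul_le_mul_of_nonneg_right (hABtil t htR) hnonneg

/-- comparison of right-hand sides for two radial diffusion equations with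
ordered coefficients `A ≤ B` and the same radial solution `u`. -/
theorem statement4 {n : ℕ} (hn : 1 ≤ n) (d : ℝ) (hd : 0 < d)
    (A B f h u : Euc n → ℝ) (Atil Btil ftil htil util : ℝ → ℝ)
    (hAc : ContinuousOn A (ball (0 : Euc n) (d / 2)))
    (hBc : ContinuousOn B (ball (0 : Euc n) (d / 2)))
    (hfc : ContinuousOn f (ball (0 : Euc n) (d / 2)))
    (hhc : ContinuousOn h (ball (0 : Euc n) (d / 2)))
    (hApos : ∀ x ∈ ball (0 : Euc n) (d / 2), 0 < A x)
    (hBpos : ∀ x ∈ ball (0 : Euc n) (d / 2), 0 < B x)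
    (hAB : ∀ x ∈ ball (0 : Euc n) (d / 2), A x ≤ B x)
    (hfpos : ∀ x ∈ ball (0 : Euc n) (d / 2), 0 ≤ f x)
    (hhpos : ∀ x ∈ ball (0 : Euc n) (d / 2), 0 ≤ h x)
    (hArad : ∀ x ∈ ball (0 : Euc n) (d / 2), A x = Atil ‖x‖)
    (hBrad : ∀ x ∈ ball (0 : Euc n) (d / 2), B x = Btil ‖x‖)
    (hfrad : ∀ x ∈ ball (0 : Euc n) (d / 2), f x = ftil ‖x‖)
    (hhrad : ∀ x ∈ ball (0 : Euc n) (d / 2), h x = htil ‖x‖)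
    (hurad : ∀ x ∈ ball (0 : Euc n) (d / 2), u x = util ‖x‖)
    (huC1 : ContDiffOn ℝ 1 u (ball (0 : Euc n) (d / 2)))
    (hFAC1 : ContDiffOn ℝ 1 (fun x => A x • gradient u x) (ball (0 : Euc n) (d / 2)))
    (hFBC1 : ContDiffOn ℝ 1 (fun x => B x • gradient u x) (ball (0 : Euc n) (d / 2)))
    (hpdeA : ∀ x ∈ ball (0 : Euc n) (d / 2),
      diverg (fun y => A y • gradient u y) x = -(f x))
    (hpdeB : ∀ x ∈ ball (0 : Euc n) (d / 2),
      diverg (fun y => B y • gradient u y) x = -(h x)) :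
    ∀ t ∈ Ioo (0 : ℝ) (d / 2),
      Btil t * (∫ s in (0:ℝ)..t, s ^ (n - 1) * ftil s)
        = Atil t * (∫ s in (0:ℝ)..t, s ^ (n - 1) * htil s) ∧
      (∫ s in (0:ℝ)..t, s ^ (n - 1) * ftil s) ≤ ∫ s in (0:ℝ)..t, s ^ (n - 1) * htil s :=
  fun _ ht => statement4_general hn hfc hhc hApos hAB hfpos hArad hBrad hfrad hhrad hurad
    (huC1.differentiableOn one_ne_zero) (hFAC1.differentiableOn one_ne_zero)
    (hFBC1.differentiableOn one_ne_zero) hpdeA hpdeB ht
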